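/- (Theorem 3.1) The position vector of M satisfies Δ^{III} x = 0 on U if and only if M is minimal, i.e. the mean curvature H vanishes identically on U. -/

import Mathlib

open Matrix

noncomputable section

/-- The parameter domain `ℝ²`. -/
abbrev Param : Type := Fin 2 → ℝ

/-- Vectors in Euclidean 3-space. -/
abbrev Vec3 : Type := Fin 3 → ℝ

/-- Partial derivative of a vector-valued function in the `i`-th coordinate direction. -/
noncomputable def pd (i : Fin 2) (f : Param → Vec3) (u : Param) : Vec3 :=
  fderiv ℝ f u (Pi.single i 1)

/-- Partial derivative of a scalar function in the `i`-th coordinate direction. -/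
noncomputable def pds (i : Fin 2) (f : Param → ℝ) (u : Param) : ℝ :=
  fderiv ℝ f u (Pi.single i 1)

/-- The Euclidean inner product on `ℝ³`. -/
def dot3 (a b : Vec3) : ℝ := ∑ k, a k * b k

/-- The Euclidean norm on `ℝ³`. -/
noncomputable def norm3 (a : Vec3) : ℝ := Real.sqrt (dot3 a a)

/-- The Gauss map `n = (x_{/1} × x_{/2}) / ‖x_{/1} × x_{/2}‖`. -/
noncomputable def gaussMap (x : Param → Vec3) (u : Param) : Vec3 :=
  (norm3 (crossProduct (pd 0 x u) (pd 1 x u)))⁻¹ • crossProduct (pd 0 x u) (pd 1 x u)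

/-- Components `g_{ij}` of the first fundamental form. -/
noncomputable def fformI (x : Param → Vec3) (u : Param) : Matrix (Fin 2) (Fin 2) ℝ :=
  Matrix.of fun i j => dot3 (pd i x u) (pd j x u)

/-- Components `b_{ij} = ⟨∂²x/∂u^i∂u^j, n⟩` of the second fundamental form. -/
noncomputable def fformII (x : Param → Vec3) (u : Param) : Matrix (Fin 2) (Fin 2) ℝ :=
  Matrix.of fun i j => dot3 (pd i (pd j x) u) (gaussMap x u)

/-- Components `e_{ij} = ⟨n_{/i}, n_{/j}⟩` of the third fundamental form. -/
noncomputable def fformIII (x : Param → Vec3) (u : Param) : Matrix (Fin 2) (Fin 2) ℝ :=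
  Matrix.of fun i j => dot3 (pd i (gaussMap x) u) (pd j (gaussMap x) u)

/-- The Gauss curvature `K = det(b_{ij}) / det(g_{ij})`. -/
noncomputable def gaussCurv (x : Param → Vec3) (u : Param) : ℝ :=
  (fformII x u).det / (fformI x u).det

/-- The mean curvature `H = (1/2) g^{ij} b_{ij}`. -/
noncomputable def meanCurv (x : Param → Vec3) (u : Param) : ℝ :=
  (1 / 2) * ∑ i, ∑ j, (fformI x u)⁻¹ i j * fformII x u i j

/-- First Beltrami operator `∇^J(φ, ψ) = a^{ij} φ_{/i} ψ_{/j}` with respect to the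
fundamental form with component matrix `a`, for scalar `φ` and `ℝ³`-valued `ψ`. -/
noncomputable def beltrami1 (a : Param → Matrix (Fin 2) (Fin 2) ℝ)
    (φ : Param → ℝ) (ψ : Param → Vec3) (u : Param) : Vec3 :=
  ∑ i, ∑ j, ((a u)⁻¹ i j * pds i φ u) • pd j ψ u

/-- Second Beltrami operator
`Δ^J f = −(1/√|det a|) ∂_i (√|det a| a^{ij} ∂_j f)` with respect to the fundamental
form with component matrix `a`, acting componentwise on `ℝ³`-valued functions. -/
noncomputable def beltrami2 (a : Param → Matrix (Fin 2) (Fin 2) ℝ)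
    (f : Param → Vec3) (u : Param) : Vec3 :=
  -((Real.sqrt |(a u).det|)⁻¹ •
    ∑ i, ∑ j, pd i (fun v => (Real.sqrt |(a v).det| * (a v)⁻¹ i j) • pd j f v) u)

/-- `x` is an immersion on `U`: the partial derivatives are linearly independent. -/
def Immersed (x : Param → Vec3) (U : Set Param) : Prop :=
  ∀ u ∈ U, LinearIndependent ℝ ![pd 0 x u, pd 1 x u]

/-- `f` is nonconstant on `U`. -/
def NonconstOn (f : Param → Vec3) (U : Set Param) : Prop :=
  ¬ ∃ v : Vec3, ∀ u ∈ U, f u = v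

/-!
With `ρ = 2H/K`, the position vector satisfies `Δ^{III} x = ∇^{III}(ρ, n) - ρ n`. The first term is
tangent to the surface, so `Δ^{III} x = 0` forces `ρ = 0`; conversely both terms vanish where `ρ`
vanishes identically.

The formula comes from the Weingarten equations together with the Cayley–Hamilton identity
`III = 2H II - K I`: they turn the flux `√e e^{ij} x_{/j}` into, up to sign, the quarter turn of
`ρ n_{/k} + x_{/k}` crossed with `n`. All second derivatives cancel in the divergence of that.
-/

open Filter Topology

section LinearAlgebra

variable {R : Type*} [CommRing R]

/-- The quarter turn `(v₁, v₂) ↦ (v₂, -v₁)` of a pair of vectors. On the components of a one-form on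
the parameter plane it is the Hodge star, so it turns gradients into divergence-free pairs. -/
def quarterTurn {V : Type*} [Neg V] (v : Fin 2 → V) : Fin 2 → V := ![v 1, -v 0]

lemma quarterTurn_smul {V : Type*} [AddCommGroup V] [Module R V] (c : R) (v : Fin 2 → V)
    (i : Fin 2) : quarterTurn (fun k => c • v k) i = c • quarterTurn v i := by
  fin_cases i <;> simp [quarterTurn]

lemma sum_adjugate_smul_eq_quarterTurn_cross (X v : Fin 2 → Fin 3 → R) (i : Fin 2) :
    ∑ j, (of fun k l => X k ⬝ᵥ v l).adjugate i j • X j = quarterTurn v i ⨯₃ (X 0 ⨯₃ X 1) := by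
  fin_cases i <;>
  simp [quarterTurn, adjugate_fin_two, cross_cross_eq_smul_sub_smul', dotProduct_comm (v _)] <;>
  abel

lemma mul_row_cross_mul_row (S : Matrix (Fin 2) (Fin 2) R) (A : Matrix (Fin 2) (Fin 3) R) :
    (S * A) 0 ⨯₃ (S * A) 1 = S.det • (A 0 ⨯₃ A 1) := by
  ext k
  fin_cases k <;> simp [cross_apply, mul_apply, det_fin_two] <;> ring

lemma mul_row_cross_add_cross_mul_row (S : Matrix (Fin 2) (Fin 2) R)
    (A : Matrix (Fin 2) (Fin 3) R) :
    (S * A) 0 ⨯₃ A 1 + A 0 ⨯₃ (S * A) 1 = S.trace • (A 0 ⨯₃ A 1) := by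
  ext k
  fin_cases k <;> simp [cross_apply, mul_apply, trace_fin_two] <;> ring

lemma det_mul_transpose_eq_cross_dotProduct_cross (A : Matrix (Fin 2) (Fin 3) R) :
    (A * Aᵀ).det = (A 0 ⨯₃ A 1) ⬝ᵥ (A 0 ⨯₃ A 1) := by
  rw [cross_dot_cross, det_fin_two]
  rfl

lemma mul_self_eq_trace_smul_sub_det_smul_one (S : Matrix (Fin 2) (Fin 2) R) :
    S * S = S.trace • S - S.det • 1 := by
  nontriviality R
  have cayley_hamilton := aeval_self_charpoly S
  simp only [charpoly_fin_two, map_add, map_sub, map_mul, map_pow, Polynomial.aeval_X,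
    Polynomial.aeval_C, Algebra.algebraMap_eq_smul_one, smul_mul_assoc, one_mul] at cayley_hamilton
  rw [← sq, ← sub_eq_zero, ← cayley_hamilton]
  abel

lemma eq_zero_of_dotProduct_frame_eq_zero {K : Type*} [Field K] [LinearOrder K]
    [IsStrictOrderedRing K] {X Y d : Fin 3 → K} (hXY : X ⨯₃ Y ≠ 0)
    (hX : d ⬝ᵥ X = 0) (hY : d ⬝ᵥ Y = 0) (hZ : d ⬝ᵥ (X ⨯₃ Y) = 0) : d = 0 := by
  have d_cross : d ⨯₃ (X ⨯₃ Y) = 0 := by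
    rw [cross_cross_eq_smul_sub_smul', hY, dotProduct_comm, hX, zero_smul, zero_smul, sub_zero]
  have cross_d : ((X ⨯₃ Y) ⬝ᵥ (X ⨯₃ Y)) • d = 0 := by
    have h := cross_cross_eq_smul_sub_smul' (X ⨯₃ Y) d (X ⨯₃ Y)
    rwa [d_cross, map_zero, hZ, zero_smul, sub_zero, eq_comm] at h
  exact (smul_eq_zero.1 cross_d).resolve_left (dotProduct_self_eq_zero.not.2 hXY)

end LinearAlgebra

section MatrixCalculus

variable {𝕜 E n : Type*} [NontriviallyNormedField 𝕜] [NormedAddCommGroup E] [NormedSpace 𝕜 E]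
  [Fintype n] [DecidableEq n] {M : E → Matrix n n 𝕜} {u : E}

lemma differentiableAt_matrix_det (hM : ∀ i j, DifferentiableAt 𝕜 (fun v => M v i j) u) :
    DifferentiableAt 𝕜 (fun v => (M v).det) u := by
  simp only [det_apply']
  fun_prop

lemma differentiableAt_matrix_adjugate (hM : ∀ i j, DifferentiableAt 𝕜 (fun v => M v i j) u)
    (i j : n) : DifferentiableAt 𝕜 (fun v => (M v).adjugate i j) u := by
  simp only [adjugate_apply]
  refine differentiableAt_matrix_det fun k l => ?_
  simp only [updateRow_apply]
  split_ifs <;> fun_prop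

lemma differentiableAt_matrix_inv (hM : ∀ i j, DifferentiableAt 𝕜 (fun v => M v i j) u)
    (hdet : (M u).det ≠ 0) (i j : n) : DifferentiableAt 𝕜 (fun v => (M v)⁻¹ i j) u := by
  simp only [inv_def, Ring.inverse_eq_inv', Matrix.smul_apply, smul_eq_mul]
  exact ((differentiableAt_matrix_det hM).inv hdet).mul (differentiableAt_matrix_adjugate hM i j)

lemma sqrt_abs_det_mul_inv_apply {M : Matrix n n ℝ} (hM : 0 ≤ M.det) (i j : n) :
    √|M.det| * M⁻¹ i j = (√|M.det|)⁻¹ * M.adjugate i j := by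
  rw [abs_of_nonneg hM, inv_def, Ring.inverse_eq_inv', Matrix.smul_apply, smul_eq_mul, ← mul_assoc,
    ← div_eq_mul_inv, Real.sqrt_div_self]

end MatrixCalculus

section PartialDerivatives

variable {f g : Param → Vec3} {φ : Param → ℝ} {u : Param}

lemma pd_congr (h : f =ᶠ[𝓝 u] g) (i : Fin 2) : pd i f u = pd i g u := by
  rw [pd, pd, h.fderiv_eq]

lemma pds_eq_zero_of_eventually_eq_const {c : ℝ} (h : ∀ᶠ v in 𝓝 u, φ v = c) (i : Fin 2) :
    pds i φ u = 0 := by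
  rw [pds, EventuallyEq.fderiv_eq (f := fun _ => c) h]
  simp

lemma pd_add (hf : DifferentiableAt ℝ f u) (hg : DifferentiableAt ℝ g u) (i : Fin 2) :
    pd i (fun v => f v + g v) u = pd i f u + pd i g u := by
  simp only [pd, fderiv_fun_add hf hg, _root_.add_apply]

lemma pd_const_smul (c : ℝ) (f : Param → Vec3) (i : Fin 2) :
    pd i (fun v => c • f v) u = c • pd i f u := by
  rw [pd, show (fun v => c • f v) = c • f from rfl, fderiv_const_smul_field]
  rfl

lemma pd_neg (f : Param → Vec3) (i : Fin 2) : pd i (fun v => -f v) u = -pd i f u := by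
  simp only [pd, fderiv_fun_neg, _root_.neg_apply]

lemma pd_smul (hφ : DifferentiableAt ℝ φ u) (hf : DifferentiableAt ℝ f u) (i : Fin 2) :
    pd i (fun v => φ v • f v) u = pds i φ u • f u + φ u • pd i f u := by
  simp [pd, pds, fderiv_fun_smul hφ hf, add_comm]

lemma pd_sum {ι : Type*} (s : Finset ι) {F : ι → Param → Vec3}
    (hF : ∀ j ∈ s, DifferentiableAt ℝ (F j) u) (i : Fin 2) :
    pd i (fun v => ∑ j ∈ s, F j v) u = ∑ j ∈ s, pd i (F j) u := by
  simp [pd, fderiv_fun_sum hF]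

lemma pd_cross (hf : DifferentiableAt ℝ f u) (hg : DifferentiableAt ℝ g u) (i : Fin 2) :
    pd i (fun v => f v ⨯₃ g v) u = pd i f u ⨯₃ g u + f u ⨯₃ pd i g u := by
  have h := (crossProduct (R := ℝ)).toContinuousBilinearMap.fderiv_of_bilinear hf hg
  simp only [LinearMap.toContinuousBilinearMap_apply] at h
  simp [pd, h, add_comm]

lemma pds_dotProduct (hf : DifferentiableAt ℝ f u) (hg : DifferentiableAt ℝ g u) (i : Fin 2) :
    pds i (fun v => f v ⬝ᵥ g v) u = pd i f u ⬝ᵥ g u + f u ⬝ᵥ pd i g u := by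
  have h := (dotProductBilin ℝ ℝ (m := Fin 3)).toContinuousBilinearMap.fderiv_of_bilinear hf hg
  simp only [LinearMap.toContinuousBilinearMap_apply, dotProductBilin_apply_apply] at h
  simp [pd, pds, h, add_comm]

lemma pd_comm (hf : ContDiffAt ℝ 2 f u) (i j : Fin 2) : pd i (pd j f) u = pd j (pd i f) u := by
  have hdf : DifferentiableAt ℝ (fderiv ℝ f) u :=
    (hf.fderiv_right (m := 1) (by norm_num)).differentiableAt one_ne_zero
  have pd_pd (k l : Fin 2) :
      pd k (pd l f) u = fderiv ℝ (fderiv ℝ f) u (Pi.single k 1) (Pi.single l 1) := by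
    change fderiv ℝ (fun v => fderiv ℝ f v (Pi.single l 1)) u _ = _
    simp [fderiv_clm_apply hdf (differentiableAt_const _)]
  rw [pd_pd, pd_pd]
  exact hf.isSymmSndFDerivAt (by simp) _ _

variable {m n : WithTop ℕ∞}

lemma contDiffAt_pd (hf : ContDiffAt ℝ n f u) (hmn : m + 1 ≤ n) (i : Fin 2) :
    ContDiffAt ℝ m (pd i f) u :=
  (hf.fderiv_right hmn).clm_apply contDiffAt_const

lemma contDiffAt_cross (hf : ContDiffAt ℝ n f u) (hg : ContDiffAt ℝ n g u) :
    ContDiffAt ℝ n (fun v => f v ⨯₃ g v) u :=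
  ((crossProduct (R := ℝ)).toContinuousBilinearMap.contDiff.contDiffAt.comp u hf).clm_apply hg

lemma contDiffAt_dotProduct (hf : ContDiffAt ℝ n f u) (hg : ContDiffAt ℝ n g u) :
    ContDiffAt ℝ n (fun v => f v ⬝ᵥ g v) u :=
  ContDiffAt.sum fun k _ => (contDiffAt_pi.1 hf k).mul (contDiffAt_pi.1 hg k)

lemma sum_pd_quarterTurn_cross (hf : ContDiffAt ℝ 2 f u) (hg : ContDiffAt ℝ 2 g u)
    (hφ : DifferentiableAt ℝ φ u) :
    ∑ i, pd i (fun v => quarterTurn (fun k => φ v • pd k f v + pd k g v) i ⨯₃ f v) u =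
      ∑ i, pds i φ u • (quarterTurn (fun k => pd k f u) i ⨯₃ f u) -
        (2 * φ u) • (pd 0 f u ⨯₃ pd 1 f u) - (pd 0 f u ⨯₃ pd 1 g u + pd 0 g u ⨯₃ pd 1 f u) := by
  have hdf (k : Fin 2) : DifferentiableAt ℝ (pd k f) u :=
    (contDiffAt_pd hf (m := 1) (by norm_num) k).differentiableAt one_ne_zero
  have hdg (k : Fin 2) : DifferentiableAt ℝ (pd k g) u :=
    (contDiffAt_pd hg (m := 1) (by norm_num) k).differentiableAt one_ne_zero
  have pd_term (i k : Fin 2) : pd i (fun v => (φ v • pd k f v + pd k g v) ⨯₃ f v) u =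
      (pds i φ u • pd k f u + φ u • pd i (pd k f) u + pd i (pd k g) u) ⨯₃ f u +
        (φ u • pd k f u + pd k g u) ⨯₃ pd i f u := by
    rw [pd_cross ((hφ.fun_smul (hdf k)).fun_add (hdg k)) (hf.differentiableAt two_ne_zero),
      pd_add (hφ.fun_smul (hdf k)) (hdg k), pd_smul hφ (hdf k)]
  simp only [Fin.sum_univ_two, quarterTurn, cons_val_zero, cons_val_one, map_neg,
    LinearMap.neg_apply, pd_neg, pd_term, pd_comm hf 1 0, pd_comm hg 1 0]
  simp only [map_add, map_smul, LinearMap.add_apply, LinearMap.smul_apply]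
  rw [← cross_anticomm (pd 0 f u) (pd 1 f u), ← cross_anticomm (pd 0 f u) (pd 1 g u)]
  module

end PartialDerivatives

section Surface

variable {x : Param → Vec3} {u : Param}

/-- The transposed Jacobian of `f`: its rows are the partial derivatives, so that the first and
third fundamental forms are Gram matrices of its rows. -/
def jac (f : Param → Vec3) (u : Param) : Matrix (Fin 2) (Fin 3) ℝ :=
  of fun i => pd i f u

/-- The unnormalized normal `x_{/1} × x_{/2}`; it vanishes exactly where `x` fails to be an
immersion, and its length is the area density. -/
def areaVector (x : Param → Vec3) (u : Param) : Vec3 :=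
  pd 0 x u ⨯₃ pd 1 x u

/-- The shape operator `b_{ik} g^{kj}`, acting from the left on the rows of `jac x u`. -/
def shape (x : Param → Vec3) (u : Param) : Matrix (Fin 2) (Fin 2) ℝ :=
  fformII x u * (fformI x u)⁻¹

/-- The sum of the principal radii of curvature, `2H / K = 1 / κ₁ + 1 / κ₂`. -/
def radiiSum (x : Param → Vec3) (u : Param) : ℝ :=
  2 * meanCurv x u / gaussCurv x u

lemma fformI_eq_jac_mul_transpose : fformI x u = jac x u * (jac x u)ᵀ := rfl

lemma fformIII_eq_jac_mul_transpose :
    fformIII x u = jac (gaussMap x) u * (jac (gaussMap x) u)ᵀ := rfl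

lemma norm3_sq (a : Vec3) : norm3 a ^ 2 = a ⬝ᵥ a :=
  Real.sq_sqrt (dotProduct_self_star_nonneg a)

lemma norm3_eq_zero {a : Vec3} : norm3 a = 0 ↔ a = 0 := by
  rw [← sq_eq_zero_iff, norm3_sq, dotProduct_self_eq_zero]

lemma det_fformI : (fformI x u).det = norm3 (areaVector x u) ^ 2 := by
  rw [norm3_sq, fformI_eq_jac_mul_transpose, det_mul_transpose_eq_cross_dotProduct_cross]
  rfl

lemma det_fformI_ne_zero (hc : areaVector x u ≠ 0) : (fformI x u).det ≠ 0 := by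
  rw [det_fformI]
  exact pow_ne_zero 2 (norm3_eq_zero.not.2 hc)

lemma det_fformIII_nonneg : 0 ≤ (fformIII x u).det := by
  rw [fformIII_eq_jac_mul_transpose, det_mul_transpose_eq_cross_dotProduct_cross]
  exact dotProduct_self_star_nonneg _

lemma trace_shape : (shape x u).trace = 2 * meanCurv x u := by
  have fformI_inv_symm : ((fformI x u)⁻¹)ᵀ = (fformI x u)⁻¹ := by
    rw [transpose_nonsing_inv, fformI_eq_jac_mul_transpose, transpose_mul, transpose_transpose]
  calc (shape x u).trace
      = ∑ i, ∑ j, fformII x u i j * ((fformI x u)⁻¹)ᵀ i j := rfl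
    _ = ∑ i, ∑ j, (fformI x u)⁻¹ i j * fformII x u i j := by simp only [fformI_inv_symm, mul_comm]
    _ = 2 * meanCurv x u := by rw [meanCurv]; ring

lemma det_shape : (shape x u).det = gaussCurv x u := by
  rw [shape, det_mul, det_nonsing_inv, Ring.inverse_eq_inv', gaussCurv, div_eq_mul_inv]

lemma gaussCurv_ne_zero (hc : areaVector x u ≠ 0) (hp : (fformII x u).det ≠ 0) :
    gaussCurv x u ≠ 0 :=
  div_ne_zero hp (det_fformI_ne_zero hc)

lemma gaussCurv_mul_radiiSum (hc : areaVector x u ≠ 0) (hp : (fformII x u).det ≠ 0) :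
    gaussCurv x u * radiiSum x u = 2 * meanCurv x u :=
  mul_div_cancel₀ _ (gaussCurv_ne_zero hc hp)

lemma norm3_smul_gaussMap (hc : areaVector x u ≠ 0) :
    norm3 (areaVector x u) • gaussMap x u = areaVector x u :=
  smul_inv_smul₀ (norm3_eq_zero.not.2 hc) _

lemma gaussMap_dotProduct_pd (x : Param → Vec3) (u : Param) (i : Fin 2) :
    gaussMap x u ⬝ᵥ pd i x u = 0 := by
  rw [gaussMap, smul_dotProduct, dotProduct_comm]
  fin_cases i <;> simp

lemma gaussMap_dotProduct_self (hc : areaVector x u ≠ 0) : gaussMap x u ⬝ᵥ gaussMap x u = 1 := by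
  have hw : norm3 (areaVector x u) ≠ 0 := norm3_eq_zero.not.2 hc
  change (norm3 (areaVector x u))⁻¹ • areaVector x u ⬝ᵥ (norm3 (areaVector x u))⁻¹ • areaVector x u
    = 1
  rw [smul_dotProduct, dotProduct_smul, ← norm3_sq, smul_eq_mul, smul_eq_mul]
  field_simp

lemma contDiffAt_areaVector {m n : WithTop ℕ∞} (hx : ContDiffAt ℝ n x u) (hmn : m + 1 ≤ n) :
    ContDiffAt ℝ m (areaVector x) u :=
  contDiffAt_cross (contDiffAt_pd hx hmn 0) (contDiffAt_pd hx hmn 1)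

lemma contDiffAt_gaussMap {m n : WithTop ℕ∞} (hx : ContDiffAt ℝ n x u) (hmn : m + 1 ≤ n)
    (hc : areaVector x u ≠ 0) : ContDiffAt ℝ m (gaussMap x) u := by
  have harea := contDiffAt_areaVector hx hmn
  exact (((contDiffAt_dotProduct harea harea).sqrt (dotProduct_self_eq_zero.not.2 hc)).inv
    (norm3_eq_zero.not.2 hc)).smul harea

lemma eventually_areaVector_ne_zero (hx : ContDiffAt ℝ 1 x u) (hc : areaVector x u ≠ 0) :
    ∀ᶠ v in 𝓝 u, areaVector x v ≠ 0 :=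
  (contDiffAt_areaVector (m := 0) hx (by norm_num)).continuousAt.eventually_ne hc

lemma fformII_transpose (hx : ContDiffAt ℝ 2 x u) : (fformII x u)ᵀ = fformII x u := by
  ext i j
  simp only [fformII, transpose_apply, of_apply, pd_comm hx i j]

lemma pd_gaussMap_dotProduct_gaussMap (hx : ContDiffAt ℝ 2 x u) (hc : areaVector x u ≠ 0)
    (i : Fin 2) : pd i (gaussMap x) u ⬝ᵥ gaussMap x u = 0 := by
  have hn : DifferentiableAt ℝ (gaussMap x) u :=
    (contDiffAt_gaussMap (m := 1) hx (by norm_num) hc).differentiableAt one_ne_zero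
  have unit_near : ∀ᶠ v in 𝓝 u, gaussMap x v ⬝ᵥ gaussMap x v = 1 :=
    (eventually_areaVector_ne_zero (hx.of_le one_le_two) hc).mono fun _ => gaussMap_dotProduct_self
  have h := pds_dotProduct hn hn i
  rw [pds_eq_zero_of_eventually_eq_const unit_near, dotProduct_comm (gaussMap x u)] at h
  linarith

lemma jac_gaussMap_mul_transpose (hx : ContDiffAt ℝ 2 x u) (hc : areaVector x u ≠ 0) :
    jac (gaussMap x) u * (jac x u)ᵀ = -fformII x u := by
  ext i j
  have hn : DifferentiableAt ℝ (gaussMap x) u :=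
    (contDiffAt_gaussMap (m := 1) hx (by norm_num) hc).differentiableAt one_ne_zero
  have hpd : DifferentiableAt ℝ (pd j x) u :=
    (contDiffAt_pd (m := 1) hx (by norm_num) j).differentiableAt one_ne_zero
  have h := pds_dotProduct hn hpd i
  rw [pds_eq_zero_of_eventually_eq_const (.of_forall fun v => gaussMap_dotProduct_pd x v j),
    dotProduct_comm (gaussMap x u)] at h
  exact eq_neg_of_add_eq_zero_left h.symm

lemma shape_mul_fformI (hc : areaVector x u ≠ 0) : shape x u * fformI x u = fformII x u :=
  nonsing_inv_mul_cancel_right _ _ (det_fformI_ne_zero hc).isUnit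

lemma jac_gaussMap_eq_neg_shape_mul_jac (hx : ContDiffAt ℝ 2 x u) (hc : areaVector x u ≠ 0) :
    jac (gaussMap x) u = -(shape x u * jac x u) := by
  set D := jac (gaussMap x) u + shape x u * jac x u with hD
  have D_tangent : D * (jac x u)ᵀ = 0 := by
    rw [hD, Matrix.add_mul, jac_gaussMap_mul_transpose hx hc, Matrix.mul_assoc,
      ← fformI_eq_jac_mul_transpose, shape_mul_fformI hc, neg_add_cancel]
  have D_normal : D *ᵥ areaVector x u = 0 := by
    have pd_normal : jac x u *ᵥ areaVector x u = 0 := by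
      funext i
      fin_cases i
      · exact dot_self_cross _ _
      · exact dot_cross_self _ _
    have pd_gaussMap_normal : jac (gaussMap x) u *ᵥ areaVector x u = 0 := by
      rw [← norm3_smul_gaussMap hc, mulVec_smul]
      exact smul_eq_zero_of_right _ (funext (pd_gaussMap_dotProduct_gaussMap hx hc))
    rw [hD, add_mulVec, ← mulVec_mulVec, pd_normal, pd_gaussMap_normal, mulVec_zero, add_zero]
  refine eq_neg_of_add_eq_zero_left (funext fun i => ?_)
  exact eq_zero_of_dotProduct_frame_eq_zero hc (congrFun₂ D_tangent i 0) (congrFun₂ D_tangent i 1)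
    (congrFun D_normal i)

lemma fformIII_eq_shape_mul_fformII (hx : ContDiffAt ℝ 2 x u) (hc : areaVector x u ≠ 0) :
    fformIII x u = shape x u * fformII x u := by
  calc fformIII x u
      = -(shape x u * jac x u) * (jac (gaussMap x) u)ᵀ := by
        rw [← jac_gaussMap_eq_neg_shape_mul_jac hx hc, fformIII_eq_jac_mul_transpose]
    _ = shape x u * (-(jac (gaussMap x) u * (jac x u)ᵀ))ᵀ := by
        simp only [transpose_neg, transpose_mul, transpose_transpose, Matrix.neg_mul,
          Matrix.mul_neg, Matrix.mul_assoc]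
    _ = shape x u * fformII x u := by
        rw [jac_gaussMap_mul_transpose hx hc, neg_neg, fformII_transpose hx]

lemma fformIII_eq_smul_fformII_sub_smul_fformI (hx : ContDiffAt ℝ 2 x u) (hc : areaVector x u ≠ 0) :
    fformIII x u = (2 * meanCurv x u) • fformII x u - gaussCurv x u • fformI x u := by
  calc fformIII x u
      = shape x u * shape x u * fformI x u := by
        rw [Matrix.mul_assoc, shape_mul_fformI hc, fformIII_eq_shape_mul_fformII hx hc]
    _ = ((2 * meanCurv x u) • shape x u - gaussCurv x u • 1) * fformI x u := by
        rw [mul_self_eq_trace_smul_sub_det_smul_one, trace_shape, det_shape]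
    _ = (2 * meanCurv x u) • fformII x u - gaussCurv x u • fformI x u := by
        rw [Matrix.sub_mul, Matrix.smul_mul, Matrix.smul_mul, Matrix.one_mul, shape_mul_fformI hc]

lemma areaVector_gaussMap (hx : ContDiffAt ℝ 2 x u) (hc : areaVector x u ≠ 0) :
    areaVector (gaussMap x) u = gaussCurv x u • areaVector x u := by
  have h := mul_row_cross_mul_row (-shape x u) (jac x u)
  rw [Matrix.neg_mul, ← jac_gaussMap_eq_neg_shape_mul_jac hx hc, det_neg, det_shape,
    Fintype.card_fin, neg_one_sq, one_mul] at h
  exact h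

lemma pd_gaussMap_cross_add_cross_pd_gaussMap (hx : ContDiffAt ℝ 2 x u)
    (hc : areaVector x u ≠ 0) :
    pd 0 (gaussMap x) u ⨯₃ pd 1 x u + pd 0 x u ⨯₃ pd 1 (gaussMap x) u =
      -(2 * meanCurv x u) • areaVector x u := by
  have h := mul_row_cross_add_cross_mul_row (-shape x u) (jac x u)
  rwa [Matrix.neg_mul, ← jac_gaussMap_eq_neg_shape_mul_jac hx hc, trace_neg, trace_shape] at h

lemma sqrt_abs_det_fformIII (hx : ContDiffAt ℝ 2 x u) (hc : areaVector x u ≠ 0) :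
    √|(fformIII x u).det| = |gaussCurv x u| * norm3 (areaVector x u) := by
  have det_eq : (fformIII x u).det = (gaussCurv x u * norm3 (areaVector x u)) ^ 2 := by
    rw [fformIII_eq_shape_mul_fformII hx hc, ← shape_mul_fformI hc, det_mul, det_mul, det_shape,
      det_fformI]
    ring
  rw [det_eq, abs_sq, Real.sqrt_sq_eq_abs, abs_mul,
    abs_of_nonneg (a := norm3 _) (Real.sqrt_nonneg _)]

lemma sum_fformIII_inv_smul_eq_cross_gaussMap (hx : ContDiffAt ℝ 2 x u)
    (hc : areaVector x u ≠ 0) {X : Fin 2 → Vec3} {w : Vec3} {i : Fin 2}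
    (hX : ∑ j, (fformIII x u).adjugate i j • X j = w ⨯₃ (gaussCurv x u • areaVector x u)) :
    ∑ j, (√|(fformIII x u).det| * (fformIII x u)⁻¹ i j) • X j =
      (SignType.sign (gaussCurv x u) : ℝ) • (w ⨯₃ gaussMap x u) := by
  have coeff_eq : (√|(fformIII x u).det|)⁻¹ * (gaussCurv x u * norm3 (areaVector x u)) =
      SignType.sign (gaussCurv x u) := by
    have hw : norm3 (areaVector x u) ≠ 0 := norm3_eq_zero.not.2 hc
    rw [sqrt_abs_det_fformIII hx hc]
    rcases eq_or_ne (gaussCurv x u) 0 with hK | hK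
    · simp [hK]
    · rw [inv_mul_eq_iff_eq_mul₀ (mul_ne_zero (abs_ne_zero.2 hK) hw), mul_right_comm,
        abs_mul_sign]
  simp only [sqrt_abs_det_mul_inv_apply det_fformIII_nonneg, mul_smul, ← Finset.smul_sum]
  rw [hX, ← norm3_smul_gaussMap hc, map_smul, map_smul, smul_smul, smul_smul, mul_assoc, coeff_eq]

lemma sum_fformIII_inv_smul_pd_gaussMap (hx : ContDiffAt ℝ 2 x u) (hc : areaVector x u ≠ 0)
    (i : Fin 2) :
    ∑ j, (√|(fformIII x u).det| * (fformIII x u)⁻¹ i j) • pd j (gaussMap x) u =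
      (SignType.sign (gaussCurv x u) : ℝ) •
        (quarterTurn (fun k => pd k (gaussMap x) u) i ⨯₃ gaussMap x u) := by
  refine sum_fformIII_inv_smul_eq_cross_gaussMap hx hc ?_
  rw [← areaVector_gaussMap hx hc]
  exact sum_adjugate_smul_eq_quarterTurn_cross (fun k => pd k (gaussMap x) u) _ i

lemma sum_fformIII_inv_smul_pd (hx : ContDiffAt ℝ 2 x u) (hc : areaVector x u ≠ 0)
    (hp : (fformII x u).det ≠ 0) (i : Fin 2) :
    ∑ j, (√|(fformIII x u).det| * (fformIII x u)⁻¹ i j) • pd j x u =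
      -(SignType.sign (gaussCurv x u) : ℝ) •
        (quarterTurn (fun k => radiiSum x u • pd k (gaussMap x) u + pd k x u) i ⨯₃
          gaussMap x u) := by
  set y : Fin 2 → Vec3 := fun k => radiiSum x u • pd k (gaussMap x) u + pd k x u with hy
  have fformIII_eq : fformIII x u = of fun k l => pd k x u ⬝ᵥ (-gaussCurv x u) • y l := by
    ext k l
    have pd_dot : pd k x u ⬝ᵥ pd l (gaussMap x) u = -fformII x u k l := by
      rw [dotProduct_comm, ← fformII_transpose hx]
      exact congrFun₂ (jac_gaussMap_mul_transpose hx hc) l k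
    rw [fformIII_eq_smul_fformII_sub_smul_fformI hx hc, of_apply, dotProduct_smul, hy,
      dotProduct_add, dotProduct_smul, pd_dot]
    change 2 * meanCurv x u * fformII x u k l - gaussCurv x u * (pd k x u ⬝ᵥ pd l x u) =
      -gaussCurv x u * (radiiSum x u * -fformII x u k l + pd k x u ⬝ᵥ pd l x u)
    linear_combination -fformII x u k l * gaussCurv_mul_radiiSum hc hp
  have hadj : ∑ j, (fformIII x u).adjugate i j • pd j x u =
      (-quarterTurn y i) ⨯₃ (gaussCurv x u • areaVector x u) := by
    rw [fformIII_eq, sum_adjugate_smul_eq_quarterTurn_cross (fun k => pd k x u),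
      quarterTurn_smul (-gaussCurv x u) y i, areaVector, map_smul, map_smul, map_neg,
      LinearMap.smul_apply, LinearMap.neg_apply, smul_neg, neg_smul]
  rw [sum_fformIII_inv_smul_eq_cross_gaussMap hx hc hadj, map_neg, LinearMap.neg_apply, smul_neg,
    neg_smul]

lemma differentiableAt_fformI (hx : ContDiffAt ℝ 2 x u) (i j : Fin 2) :
    DifferentiableAt ℝ (fun v => fformI x v i j) u :=
  (contDiffAt_dotProduct (contDiffAt_pd (m := 1) hx (by norm_num) i)
    (contDiffAt_pd hx (by norm_num) j)).differentiableAt one_ne_zero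

lemma differentiableAt_fformII (hx : ContDiffAt ℝ 3 x u) (hc : areaVector x u ≠ 0) (i j : Fin 2) :
    DifferentiableAt ℝ (fun v => fformII x v i j) u :=
  (contDiffAt_dotProduct
    (contDiffAt_pd (m := 1) (contDiffAt_pd (m := 2) hx (by norm_num) j) (by norm_num) i)
    (contDiffAt_gaussMap hx (by norm_num) hc)).differentiableAt one_ne_zero

lemma differentiableAt_fformIII (hx : ContDiffAt ℝ 3 x u) (hc : areaVector x u ≠ 0)
    (i j : Fin 2) : DifferentiableAt ℝ (fun v => fformIII x v i j) u :=
  have hn : ContDiffAt ℝ 2 (gaussMap x) u := contDiffAt_gaussMap hx (by norm_num) hc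
  (contDiffAt_dotProduct (contDiffAt_pd (m := 1) hn (by norm_num) i)
    (contDiffAt_pd hn (by norm_num) j)).differentiableAt one_ne_zero

lemma differentiableAt_gaussCurv (hx : ContDiffAt ℝ 3 x u) (hc : areaVector x u ≠ 0) :
    DifferentiableAt ℝ (gaussCurv x) u :=
  (differentiableAt_matrix_det (differentiableAt_fformII hx hc)).mul
    ((differentiableAt_matrix_det (differentiableAt_fformI (hx.of_le (by norm_num)))).inv
      (det_fformI_ne_zero hc))

lemma differentiableAt_meanCurv (hx : ContDiffAt ℝ 3 x u) (hc : areaVector x u ≠ 0) :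
    DifferentiableAt ℝ (meanCurv x) u :=
  (DifferentiableAt.fun_sum fun i _ => DifferentiableAt.fun_sum fun j _ =>
    (differentiableAt_matrix_inv (differentiableAt_fformI (hx.of_le (by norm_num)))
      (det_fformI_ne_zero hc) i j).mul (differentiableAt_fformII hx hc i j)).const_mul _

lemma differentiableAt_radiiSum (hx : ContDiffAt ℝ 3 x u) (hc : areaVector x u ≠ 0)
    (hp : (fformII x u).det ≠ 0) : DifferentiableAt ℝ (radiiSum x) u :=
  ((differentiableAt_meanCurv hx hc).const_mul 2).mul
    ((differentiableAt_gaussCurv hx hc).inv (gaussCurv_ne_zero hc hp))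

lemma sqrt_abs_det_fformIII_ne_zero (hx : ContDiffAt ℝ 2 x u) (hc : areaVector x u ≠ 0)
    (hp : (fformII x u).det ≠ 0) : √|(fformIII x u).det| ≠ 0 := by
  rw [sqrt_abs_det_fformIII hx hc]
  exact mul_ne_zero (abs_ne_zero.2 (gaussCurv_ne_zero hc hp)) (norm3_eq_zero.not.2 hc)

lemma differentiableAt_fformIII_inv_smul_pd (hx : ContDiffAt ℝ 3 x u) (hc : areaVector x u ≠ 0)
    (hp : (fformII x u).det ≠ 0) (i j : Fin 2) :
    DifferentiableAt ℝ
      (fun v => (√|(fformIII x v).det| * (fformIII x v)⁻¹ i j) • pd j x v) u := by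
  have hsqrt := sqrt_abs_det_fformIII_ne_zero (hx.of_le (by norm_num)) hc hp
  have hdet : (fformIII x u).det ≠ 0 := fun h => hsqrt (by rw [h, abs_zero, Real.sqrt_zero])
  have hIII := differentiableAt_fformIII hx hc
  exact ((((differentiableAt_matrix_det hIII).abs hdet).sqrt (abs_ne_zero.2 hdet)).mul
    (differentiableAt_matrix_inv hIII hdet i j)).smul
    ((contDiffAt_pd (m := 2) hx (by norm_num) j).differentiableAt two_ne_zero)

lemma eventually_sum_fformIII_inv_smul_pd (hx : ContDiffAt ℝ 3 x u) (hc : areaVector x u ≠ 0)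
    (hp : (fformII x u).det ≠ 0) (i : Fin 2) :
    ∀ᶠ v in 𝓝 u, ∑ j, (√|(fformIII x v).det| * (fformIII x v)⁻¹ i j) • pd j x v =
      -(SignType.sign (gaussCurv x u) : ℝ) •
        (quarterTurn (fun k => radiiSum x v • pd k (gaussMap x) v + pd k x v) i ⨯₃
          gaussMap x v) := by
  have sign_near : ∀ᶠ v in 𝓝 u, SignType.sign (gaussCurv x v) = SignType.sign (gaussCurv x u) :=
    ((continuousAt_sign_of_ne_zero (gaussCurv_ne_zero hc hp)).comp
      (differentiableAt_gaussCurv hx hc).continuousAt).eventually_mem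
        ((isOpen_discrete {SignType.sign (gaussCurv x u)}).mem_nhds rfl)
  have det_near : ∀ᶠ v in 𝓝 u, (fformII x v).det ≠ 0 :=
    (differentiableAt_matrix_det
      (differentiableAt_fformII hx hc)).continuousAt.eventually_ne hp
  filter_upwards [sign_near, det_near, hx.eventually (by decide),
    eventually_areaVector_ne_zero (hx.of_le (by norm_num)) hc] with v hsign hpv hxv hcv
  rw [← hsign, sum_fformIII_inv_smul_pd (hxv.of_le (by norm_num)) hcv hpv]

lemma sum_pd_fformIII_inv_smul_pd (hx : ContDiffAt ℝ 3 x u) (hc : areaVector x u ≠ 0)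
    (hp : (fformII x u).det ≠ 0) :
    ∑ i, ∑ j, pd i (fun v => (√|(fformIII x v).det| * (fformIII x v)⁻¹ i j) • pd j x v) u =
      (SignType.sign (gaussCurv x u) : ℝ) • ((2 * meanCurv x u) • areaVector x u -
        ∑ i, pds i (radiiSum x) u •
          (quarterTurn (fun k => pd k (gaussMap x) u) i ⨯₃ gaussMap x u)) := by
  have hx2 : ContDiffAt ℝ 2 x u := hx.of_le (by norm_num)
  have hn : ContDiffAt ℝ 2 (gaussMap x) u := contDiffAt_gaussMap hx (by norm_num) hc
  have pd_flux (i : Fin 2) :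
      ∑ j, pd i (fun v => (√|(fformIII x v).det| * (fformIII x v)⁻¹ i j) • pd j x v) u =
        -(SignType.sign (gaussCurv x u) : ℝ) • pd i (fun v =>
          quarterTurn (fun k => radiiSum x v • pd k (gaussMap x) v + pd k x v) i ⨯₃
            gaussMap x v) u := by
    rw [← pd_sum _ fun j _ => differentiableAt_fformIII_inv_smul_pd hx hc hp i j,
      pd_congr (eventually_sum_fformIII_inv_smul_pd hx hc hp i), pd_const_smul]
  simp only [pd_flux]
  rw [← Finset.smul_sum, sum_pd_quarterTurn_cross hn hx2 (differentiableAt_radiiSum hx hc hp),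
    pd_gaussMap_cross_add_cross_pd_gaussMap hx2 hc, ← areaVector, areaVector_gaussMap hx2 hc,
    smul_smul, mul_right_comm, mul_assoc 2,
    gaussCurv_mul_radiiSum hc hp]
  module

lemma sqrt_abs_det_smul_beltrami1_gaussMap (hx : ContDiffAt ℝ 2 x u) (hc : areaVector x u ≠ 0)
    (φ : Param → ℝ) :
    √|(fformIII x u).det| • beltrami1 (fformIII x) φ (gaussMap x) u =
      (SignType.sign (gaussCurv x u) : ℝ) • ∑ i, pds i φ u •
        (quarterTurn (fun k => pd k (gaussMap x) u) i ⨯₃ gaussMap x u) := by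
  simp only [beltrami1, Finset.smul_sum]
  refine Finset.sum_congr rfl fun i _ => ?_
  rw [smul_comm, ← sum_fformIII_inv_smul_pd_gaussMap hx hc, Finset.smul_sum]
  refine Finset.sum_congr rfl fun j _ => ?_
  module

lemma sqrt_abs_det_smul_radiiSum_smul_gaussMap (hx : ContDiffAt ℝ 2 x u)
    (hc : areaVector x u ≠ 0) (hp : (fformII x u).det ≠ 0) :
    √|(fformIII x u).det| • radiiSum x u • gaussMap x u =
      (SignType.sign (gaussCurv x u) : ℝ) • (2 * meanCurv x u) • areaVector x u := by
  calc √|(fformIII x u).det| • radiiSum x u • gaussMap x u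
      = (SignType.sign (gaussCurv x u) : ℝ) • (gaussCurv x u * radiiSum x u) •
          norm3 (areaVector x u) • gaussMap x u := by
        rw [sqrt_abs_det_fformIII hx hc, ← sign_mul_self]
        module
    _ = (SignType.sign (gaussCurv x u) : ℝ) • (2 * meanCurv x u) • areaVector x u := by
        rw [gaussCurv_mul_radiiSum hc hp, norm3_smul_gaussMap hc]

theorem beltrami2_fformIII_self (hx : ContDiffAt ℝ 3 x u) (hc : areaVector x u ≠ 0)
    (hp : (fformII x u).det ≠ 0) :
    beltrami2 (fformIII x) x u =
      beltrami1 (fformIII x) (radiiSum x) (gaussMap x) u - radiiSum x u • gaussMap x u := by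
  have hx2 : ContDiffAt ℝ 2 x u := hx.of_le (by norm_num)
  rw [beltrami2, sum_pd_fformIII_inv_smul_pd hx hc hp, smul_sub,
    ← sqrt_abs_det_smul_radiiSum_smul_gaussMap hx2 hc hp,
    ← sqrt_abs_det_smul_beltrami1_gaussMap hx2 hc, ← smul_sub,
    inv_smul_smul₀ (sqrt_abs_det_fformIII_ne_zero hx2 hc hp), neg_sub]

lemma beltrami1_gaussMap_dotProduct_gaussMap (hx : ContDiffAt ℝ 2 x u) (hc : areaVector x u ≠ 0)
    (a : Param → Matrix (Fin 2) (Fin 2) ℝ) (φ : Param → ℝ) :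
    beltrami1 a φ (gaussMap x) u ⬝ᵥ gaussMap x u = 0 := by
  simp only [beltrami1, sum_dotProduct, smul_dotProduct, pd_gaussMap_dotProduct_gaussMap hx hc,
    smul_zero, Finset.sum_const_zero]

lemma meanCurv_eq_zero_of_beltrami2_eq_zero (hx : ContDiffAt ℝ 3 x u) (hc : areaVector x u ≠ 0)
    (hp : (fformII x u).det ≠ 0) (h : beltrami2 (fformIII x) x u = 0) : meanCurv x u = 0 := by
  have normal_part := congrArg (· ⬝ᵥ gaussMap x u) h
  simp only [beltrami2_fformIII_self hx hc hp, sub_dotProduct, smul_dotProduct, zero_dotProduct,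
    beltrami1_gaussMap_dotProduct_gaussMap (hx.of_le (by norm_num)) hc,
    gaussMap_dotProduct_self hc, smul_eq_mul, mul_one, zero_sub, neg_eq_zero] at normal_part
  linarith [gaussCurv_mul_radiiSum hc hp, mul_eq_zero_of_right (gaussCurv x u) normal_part]

lemma beltrami2_eq_zero_of_eventually_meanCurv_eq_zero (hx : ContDiffAt ℝ 3 x u)
    (hc : areaVector x u ≠ 0) (hp : (fformII x u).det ≠ 0)
    (h : ∀ᶠ v in 𝓝 u, meanCurv x v = 0) : beltrami2 (fformIII x) x u = 0 := by
  have radiiSum_near : ∀ᶠ v in 𝓝 u, radiiSum x v = 0 := h.mono fun v hv => by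
    rw [radiiSum, hv, mul_zero, zero_div]
  simp only [beltrami2_fformIII_self hx hc hp, beltrami1, radiiSum_near.self_of_nhds,
    pds_eq_zero_of_eventually_eq_const radiiSum_near, mul_zero, zero_smul, Finset.sum_const_zero,
    sub_zero]

end Surface

theorem stmt13_general (U : Set Param) (x : Param → Vec3) (hU : IsOpen U)
    (hx : ContDiffOn ℝ 3 x U) (himm : Immersed x U) (hpar : ∀ u ∈ U, (fformII x u).det ≠ 0) :
    (∀ u ∈ U, beltrami2 (fformIII x) x u = 0) ↔ (∀ u ∈ U, meanCurv x u = 0) := by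
  have hxAt (u) (hu : u ∈ U) : ContDiffAt ℝ 3 x u := hx.contDiffAt (hU.mem_nhds hu)
  have harea (u) (hu : u ∈ U) : areaVector x u ≠ 0 :=
    crossProduct_ne_zero_iff_linearIndependent.2 (himm u hu)
  constructor
  · intro harmonic u hu
    exact meanCurv_eq_zero_of_beltrami2_eq_zero (hxAt u hu) (harea u hu) (hpar u hu)
      (harmonic u hu)
  · intro minimal u hu
    exact beltrami2_eq_zero_of_eventually_meanCurv_eq_zero (hxAt u hu) (harea u hu) (hpar u hu)
      (eventually_of_mem (hU.mem_nhds hu) minimal)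

/-- Theorem 3.1: `Δ^{III} x = 0` on `U` iff `M` is minimal (`H ≡ 0`). -/
theorem stmt13 (U : Set Param) (x : Param → Vec3)
    (hU : IsOpen U) (hUconn : IsConnected U)
    (hx : ContDiffOn ℝ (⊤ : ℕ∞) x U) (himm : Immersed x U)
    (hpar : ∀ u ∈ U, (fformII x u).det ≠ 0) :
    (∀ u ∈ U, beltrami2 (fformIII x) x u = 0) ↔ (∀ u ∈ U, meanCurv x u = 0) :=
  stmt13_general U x hU (contDiffOn_infty.1 hx 3) himm hpar
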